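/- For every R > 0 there is a constant C(R), depending only on R, such that for every probability density G on ℝ³ × ℝ³ with finite Fisher information I(G) := ∫_{ℝ⁶} |∇G|²/G < ∞, one has ∫_{B_R × B_R} G(v,w)/|v−w|^{3/2} dv dw ≤ C(R)·(1 + I(G)), where B_R ⊂ ℝ³ is the closed ball of radius R centered at the origin. -/

import Mathlib

open MeasureTheory Real

noncomputable section

abbrev V3 := Fin 3 → ℝ

/-- Squared Euclidean norm on ℝ³. -/
def sq3 (z : V3) : ℝ := ∑ α, (z α) ^ 2
/-- Euclidean norm on ℝ³. -/
def nrm3 (z : V3) : ℝ := Real.sqrt (sq3 z)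

/-- Partial derivative in the `α`-th coordinate of the first variable `v`. -/
def pdv (G : V3 × V3 → ℝ) (z : V3 × V3) (α : Fin 3) : ℝ :=
  fderiv ℝ G z (Pi.single α 1, 0)

/-- Partial derivative in the `α`-th coordinate of the second variable `w`. -/
def pdw (G : V3 × V3 → ℝ) (z : V3 × V3) (α : Fin 3) : ℝ :=
  fderiv ℝ G z (0, Pi.single α 1)

/-- Fisher information of a density on ℝ³ × ℝ³. -/
def fisher2 (G : V3 × V3 → ℝ) : ℝ :=
  ∫ z : V3 × V3, (∑ α, ((pdv G z α) ^ 2 + (pdw G z α) ^ 2)) / G z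

open Filter Topology

lemma sq3_nonneg (z : V3) : 0 ≤ sq3 z :=
  Finset.sum_nonneg fun _ _ => sq_nonneg _

lemma sq_coord_le_sq3 (z : V3) (α : Fin 3) : z α ^ 2 ≤ sq3 z :=
  Finset.single_le_sum (f := fun α => z α ^ 2) (fun _ _ => sq_nonneg _) (Finset.mem_univ α)

lemma continuous_sq3 : Continuous sq3 := by
  unfold sq3
  fun_prop

lemma sq3_add_smul_single (z : V3) (α : Fin 3) (t : ℝ) :
    sq3 (z + t • Pi.single α 1) = sq3 z + 2 * t * z α + t ^ 2 := by
  fin_cases α <;> simp [sq3, Fin.sum_univ_three] <;> ring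

/-- The components of the field `(v - w) / (|v - w|² + ε)`, a regularization of
`(v - w) / |v - w|²`. -/
def hardyField (ε : ℝ) (α : Fin 3) (z : V3 × V3) : ℝ :=
  (z.1 - z.2) α / (sq3 (z.1 - z.2) + ε)

/-- The derivative of `hardyField ε α` in the `α`-th coordinate of the first variable. -/
def hardyFieldDeriv (ε : ℝ) (α : Fin 3) (z : V3 × V3) : ℝ :=
  (sq3 (z.1 - z.2) + ε - 2 * (z.1 - z.2) α ^ 2) / (sq3 (z.1 - z.2) + ε) ^ 2

lemma sq3_add_pos {ε : ℝ} (hε : 0 < ε) (z : V3) : 0 < sq3 z + ε :=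
  add_pos_of_nonneg_of_pos (sq3_nonneg z) hε

lemma continuous_hardyField {ε : ℝ} (hε : 0 < ε) (α : Fin 3) :
    Continuous (hardyField ε α) := by
  have := continuous_sq3
  exact Continuous.div (by fun_prop) (by fun_prop) fun z => (sq3_add_pos hε _).ne'

lemma continuous_hardyFieldDeriv {ε : ℝ} (hε : 0 < ε) (α : Fin 3) :
    Continuous (hardyFieldDeriv ε α) := by
  have := continuous_sq3
  exact Continuous.div (by fun_prop) (by fun_prop) fun z => (pow_pos (sq3_add_pos hε _) 2).ne'

lemma abs_hardyField_le {ε : ℝ} (hε : 0 < ε) (α : Fin 3) (z : V3 × V3) :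
    |hardyField ε α z| ≤ 1 + 1 / ε := by
  have hD := sq3_add_pos hε (z.1 - z.2)
  have ha := sq_coord_le_sq3 (z.1 - z.2) α
  have h0 := sq3_nonneg (z.1 - z.2)
  rw [hardyField, abs_div, abs_of_pos hD, div_le_iff₀ hD]
  have h1 : 1 ≤ 1 / ε * (sq3 (z.1 - z.2) + ε) := by
    rw [mul_add, one_div_mul_cancel hε.ne']
    have : 0 ≤ 1 / ε * sq3 (z.1 - z.2) := by positivity
    linarith
  rw [← sq_abs] at ha
  nlinarith [sq_nonneg (|(z.1 - z.2) α| - 1)]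

lemma abs_hardyFieldDeriv_le {ε : ℝ} (hε : 0 < ε) (α : Fin 3) (z : V3 × V3) :
    |hardyFieldDeriv ε α z| ≤ 1 / ε := by
  have hD := sq3_add_pos hε (z.1 - z.2)
  have ha := sq_coord_le_sq3 (z.1 - z.2) α
  have h0 := sq3_nonneg (z.1 - z.2)
  have hb : |sq3 (z.1 - z.2) + ε - 2 * (z.1 - z.2) α ^ 2| ≤ sq3 (z.1 - z.2) + ε := by
    rw [abs_le]
    constructor <;> nlinarith [sq_nonneg ((z.1 - z.2) α)]
  rw [hardyFieldDeriv, abs_div, abs_of_pos (pow_pos hD 2)]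
  calc _ ≤ (sq3 (z.1 - z.2) + ε) / (sq3 (z.1 - z.2) + ε) ^ 2 := by gcongr
    _ = 1 / (sq3 (z.1 - z.2) + ε) := by field_simp
    _ ≤ 1 / ε := by gcongr; linarith

lemma hasLineDerivAt_hardyField {ε : ℝ} (hε : 0 < ε) (α : Fin 3) (z : V3 × V3) :
    HasLineDerivAt ℝ (hardyField ε α) (hardyFieldDeriv ε α z) z (Pi.single α 1, 0) := by
  have hD := sq3_add_pos hε (z.1 - z.2)
  have hline : (fun t : ℝ => hardyField ε α (z + t • (Pi.single α 1, 0))) = fun t : ℝ =>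
      ((z.1 - z.2) α + t) /
        (sq3 (z.1 - z.2) + 2 * t * (z.1 - z.2) α + t ^ 2 + ε) := by
    funext t
    have : (z + t • ((Pi.single α 1, 0) : V3 × V3)).1 - (z + t • ((Pi.single α 1, 0) : V3 × V3)).2
        = (z.1 - z.2) + t • Pi.single α 1 := by
      simp only [Prod.fst_add, Prod.snd_add, Prod.smul_fst, Prod.smul_snd, smul_zero, add_zero]
      abel
    rw [hardyField, this, sq3_add_smul_single]
    simp
  rw [HasLineDerivAt, hline]
  have hn : HasDerivAt (fun t : ℝ => (z.1 - z.2) α + t) 1 0 := (hasDerivAt_id 0).const_add _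
  have hd : HasDerivAt
      (fun t : ℝ => sq3 (z.1 - z.2) + 2 * t * (z.1 - z.2) α + t ^ 2 + ε)
      (2 * (z.1 - z.2) α) 0 := by
    have h1 := (((hasDerivAt_id (0 : ℝ)).const_mul 2).mul_const ((z.1 - z.2) α)).const_add
      (sq3 (z.1 - z.2))
    have h2 := (h1.add ((hasDerivAt_id (0 : ℝ)).pow 2)).add_const ε
    exact h2.congr_deriv (by simp)
  refine (hn.div hd (by simpa using hD.ne')).congr_deriv ?_
  simp only [hardyFieldDeriv]
  congr 1 <;> ring

/-- The divergence of the regularized field dominates its squared length with room to spare. -/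
lemma inv_le_sum_hardyFieldDeriv {ε : ℝ} (hε : 0 < ε) (z : V3 × V3) :
    1 / (sq3 (z.1 - z.2) + ε) ≤
      ∑ α, (2 * hardyFieldDeriv ε α z - hardyField ε α z ^ 2) := by
  have hD := sq3_add_pos hε (z.1 - z.2)
  have hsum : ∑ α, (2 * hardyFieldDeriv ε α z - hardyField ε α z ^ 2) =
      (6 * (sq3 (z.1 - z.2) + ε) - 5 * sq3 (z.1 - z.2)) / (sq3 (z.1 - z.2) + ε) ^ 2 := by
    simp only [hardyFieldDeriv, hardyField, Fin.sum_univ_three]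
    generalize hDdef : sq3 (z.1 - z.2) + ε = D at *
    have hs : sq3 (z.1 - z.2) =
        (z.1 - z.2) 0 ^ 2 + (z.1 - z.2) 1 ^ 2 + (z.1 - z.2) 2 ^ 2 := by
      simp [sq3, Fin.sum_univ_three]
    rw [hs]
    field_simp
    ring
  rw [hsum, div_le_div_iff₀ hD (by positivity)]
  nlinarith [sq3_nonneg (z.1 - z.2)]

lemma neg_mul_le_sq_div_add {g p : ℝ} (hg : 0 ≤ g) (hp : g = 0 → p = 0) (f : ℝ) :
    -(2 * (p * f)) ≤ p ^ 2 / g + g * f ^ 2 := by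
  rcases hg.eq_or_lt with h | h
  · simp [hp h.symm, ← h]
  · have : p ^ 2 / g + g * f ^ 2 + 2 * (p * f) = (p + g * f) ^ 2 / g := by
      field_simp
      ring
    have : 0 ≤ (p + g * f) ^ 2 / g := by positivity
    linarith

lemma pdv_eq_zero {G : V3 × V3 → ℝ} (h0 : ∀ z, 0 ≤ G z) {z : V3 × V3} (hz : G z = 0)
    (α : Fin 3) : pdv G z α = 0 := by
  have : IsLocalMin G z := Eventually.of_forall fun y => by simpa [hz] using h0 y
  simp [pdv, this.fderiv_eq_zero]

lemma measurable_pdv (G : V3 × V3 → ℝ) (α : Fin 3) : Measurable fun z => pdv G z α :=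
  measurable_fderiv_apply_const ℝ G _

lemma sum_sq_pdv_div_le {G : V3 × V3 → ℝ} (h0 : ∀ z, 0 ≤ G z) (z : V3 × V3) :
    ∑ α, (pdv G z α) ^ 2 / G z ≤ (∑ α, ((pdv G z α) ^ 2 + (pdw G z α) ^ 2)) / G z := by
  rw [← Finset.sum_div]
  have := h0 z
  gcongr
  nlinarith [sq_nonneg (pdw G z ‹_›)]

lemma integrable_pdv {G : V3 × V3 → ℝ} (h0 : ∀ z, 0 ≤ G z) (hG : Integrable G)
    (hI : Integrable fun z : V3 × V3 =>
      (∑ α, ((pdv G z α) ^ 2 + (pdw G z α) ^ 2)) / G z) (α : Fin 3) :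
    Integrable fun z => pdv G z α := by
  refine (hI.add hG).mono' (measurable_pdv G α).aestronglyMeasurable
    (Eventually.of_forall fun z => ?_)
  have hle : (pdv G z α) ^ 2 / G z ≤ _ :=
    (Finset.single_le_sum (f := fun α => (pdv G z α) ^ 2 / G z)
      (fun _ _ => div_nonneg (sq_nonneg _) (h0 z)) (Finset.mem_univ α)).trans
      (sum_sq_pdv_div_le h0 z)
  have hq : 0 ≤ (pdv G z α) ^ 2 / G z := div_nonneg (sq_nonneg _) (h0 z)
  have h1 := neg_mul_le_sq_div_add (h0 z) (fun h => pdv_eq_zero h0 h α) 1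
  have h2 := neg_mul_le_sq_div_add (h0 z) (fun h => pdv_eq_zero h0 h α) (-1)
  have := h0 z
  simp only [Pi.add_apply]
  rw [Real.norm_eq_abs, abs_le]
  constructor <;> linarith

lemma integrable_div_sq3_add {G : V3 × V3 → ℝ} (hG : Integrable G) {ε : ℝ} (hε : 0 < ε) :
    Integrable fun z : V3 × V3 => G z * (1 / (sq3 (z.1 - z.2) + ε)) := by
  have hc := continuous_sq3
  refine hG.mul_bdd (c := 1 / ε) (Continuous.aestronglyMeasurable ?_)
    (Eventually.of_forall fun z => ?_)
  · exact Continuous.div (by fun_prop) (by fun_prop) fun z => (sq3_add_pos hε _).ne'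
  · have hD := sq3_add_pos hε (z.1 - z.2)
    rw [Real.norm_of_nonneg (by positivity)]
    gcongr
    linarith [sq3_nonneg (z.1 - z.2)]

/-- Regularized Hardy inequality in the relative variable. -/
lemma integral_div_sq3_add_le_fisher2 {G : V3 × V3 → ℝ} (h0 : ∀ z, 0 ≤ G z)
    (hG : Integrable G) (hdiff : Differentiable ℝ G)
    (hI : Integrable fun z : V3 × V3 =>
      (∑ α, ((pdv G z α) ^ 2 + (pdw G z α) ^ 2)) / G z) {ε : ℝ} (hε : 0 < ε) :
    ∫ z : V3 × V3, G z * (1 / (sq3 (z.1 - z.2) + ε)) ≤ fisher2 G := by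
  have hGF' (α : Fin 3) : Integrable fun z => G z * hardyFieldDeriv ε α z :=
    hG.mul_bdd (continuous_hardyFieldDeriv hε α).aestronglyMeasurable
      (Eventually.of_forall (abs_hardyFieldDeriv_le hε α))
  have hG'F (α : Fin 3) : Integrable fun z => pdv G z α * hardyField ε α z :=
    (integrable_pdv h0 hG hI α).mul_bdd (continuous_hardyField hε α).aestronglyMeasurable
      (Eventually.of_forall (abs_hardyField_le hε α))
  have : (volume : Measure (V3 × V3)).IsAddHaarMeasure :=
    Measure.prod.instIsAddHaarMeasure _ _
  have hparts (α : Fin 3) :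
      ∫ z, G z * hardyFieldDeriv ε α z = - ∫ z, pdv G z α * hardyField ε α z :=
    integral_bilinear_hasLineDerivAt_right_eq_neg_left_of_integrable
      (B := ContinuousLinearMap.mul ℝ ℝ) (hG'F α) (hGF' α)
      (hG.mul_bdd (continuous_hardyField hε α).aestronglyMeasurable
        (Eventually.of_forall (abs_hardyField_le hε α)))
      (fun z _ => (hdiff z).hasFDerivAt.hasLineDerivAt _)
      (fun z _ => hasLineDerivAt_hardyField hε α z)
  have hterm (α : Fin 3) : Integrable fun z =>
      2 * (G z * hardyFieldDeriv ε α z + pdv G z α * hardyField ε α z) :=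
    ((hGF' α).add (hG'F α)).const_mul 2
  have hzero :
      ∫ z, ∑ α, 2 * (G z * hardyFieldDeriv ε α z + pdv G z α * hardyField ε α z) = 0 := by
    rw [integral_finsetSum _ fun α _ => hterm α]
    refine Finset.sum_eq_zero fun α _ => ?_
    rw [integral_const_mul, integral_add (hGF' α) (hG'F α), hparts α, neg_add_cancel, mul_zero]
  have hint : Integrable fun z =>
      ∑ α, 2 * (G z * hardyFieldDeriv ε α z + pdv G z α * hardyField ε α z) :=
    integrable_finsetSum _ fun α _ => hterm α
  calc ∫ z : V3 × V3, G z * (1 / (sq3 (z.1 - z.2) + ε))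
      ≤ ∫ z, ((∑ α, ((pdv G z α) ^ 2 + (pdw G z α) ^ 2)) / G z +
          ∑ α, 2 * (G z * hardyFieldDeriv ε α z + pdv G z α * hardyField ε α z)) := by
        refine integral_mono (integrable_div_sq3_add hG hε) (hI.add hint) fun z => ?_
        have hdiv := mul_le_mul_of_nonneg_left (inv_le_sum_hardyFieldDeriv hε z) (h0 z)
        have hfish := sum_sq_pdv_div_le h0 z
        have hyoung : ∑ α, -(2 * (pdv G z α * hardyField ε α z)) ≤
            ∑ α, ((pdv G z α) ^ 2 / G z + G z * hardyField ε α z ^ 2) :=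
          Finset.sum_le_sum fun α _ =>
            neg_mul_le_sq_div_add (h0 z) (fun h => pdv_eq_zero h0 h α) _
        dsimp only
        simp only [Fin.sum_univ_three] at hdiv hfish hyoung ⊢
        linarith
    _ = fisher2 G := by rw [integral_add hI hint, hzero, add_zero, fisher2]

lemma rpow_neg_mul_sq_div_le {s ε : ℝ} (hs : 0 ≤ s) (hε : 0 < ε) :
    1 / s ^ ((3 : ℝ) / 2) * (s ^ 2 / (s ^ 2 + ε)) ≤ 1 + 1 / (s ^ 2 + ε) := by
  rcases hs.eq_or_lt with rfl | hs
  · norm_num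
    positivity
  have hhalf : s ^ 2 = s ^ ((3 : ℝ) / 2) * s ^ ((1 : ℝ) / 2) := by
    rw [← Real.rpow_add hs]
    norm_num
  have hle : s ^ ((1 : ℝ) / 2) ≤ 1 + s ^ 2 := by
    rw [← Real.sqrt_eq_rpow, Real.sqrt_le_left (by positivity)]
    nlinarith [sq_nonneg (s - 1), sq_nonneg (s ^ 2)]
  have hD : 0 < s ^ 2 + ε := by positivity
  have hpos : 0 < s ^ ((3 : ℝ) / 2) := by positivity
  calc 1 / s ^ ((3 : ℝ) / 2) * (s ^ 2 / (s ^ 2 + ε))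
      = (1 / s ^ ((3 : ℝ) / 2) * s ^ 2) / (s ^ 2 + ε) := by ring
    _ = s ^ ((1 : ℝ) / 2) / (s ^ 2 + ε) := by
        congr 1
        rw [hhalf]
        field_simp
    _ ≤ (1 + s ^ 2) / (s ^ 2 + ε) := by gcongr
    _ ≤ (s ^ 2 + ε + 1) / (s ^ 2 + ε) := div_le_div_of_nonneg_right (by linarith) hD.le
    _ = 1 + 1 / (s ^ 2 + ε) := by field_simp

lemma nrm3_sq (z : V3) : nrm3 z ^ 2 = sq3 z := Real.sq_sqrt (sq3_nonneg z)

/-- For every `R > 0` there is `C(R)` such that for every probability density `G`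
on ℝ³ × ℝ³ with finite Fisher information,
`∫_{B_R × B_R} G(v,w)/|v−w|^{3/2} ≤ C(R)(1 + I(G))`. -/
theorem coulomb_singularity_fisher_bound_strong :
    ∀ R : ℝ, 0 < R → ∃ C : ℝ, 0 < C ∧
      ∀ G : V3 × V3 → ℝ, Measurable G → (∀ z, 0 ≤ G z) →
        (∫ z : V3 × V3, G z) = 1 → Differentiable ℝ G →
        Integrable (fun z : V3 × V3 => (∑ α, ((pdv G z α) ^ 2 + (pdw G z α) ^ 2)) / G z) →
        (∫ z in {p : V3 × V3 | nrm3 p.1 ≤ R ∧ nrm3 p.2 ≤ R},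
            G z / (nrm3 (z.1 - z.2)) ^ ((3 : ℝ) / 2))
          ≤ C * (1 + fisher2 G) := by
  intro R _
  refine ⟨1, one_pos, fun G _ h0 hone hdiff hI => ?_⟩
  have hG : Integrable G := Integrable.of_integral_ne_zero (by rw [hone]; exact one_ne_zero)
  rw [one_mul]
  set S := {p : V3 × V3 | nrm3 p.1 ≤ R ∧ nrm3 p.2 ≤ R}
  by_cases hint : IntegrableOn
      (fun z : V3 × V3 => G z / (nrm3 (z.1 - z.2)) ^ ((3 : ℝ) / 2)) S
  swap
  · rw [integral_undef hint]
    have : 0 ≤ fisher2 G := integral_nonneg fun z =>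
      div_nonneg (Finset.sum_nonneg fun _ _ => by positivity) (h0 z)
    linarith
  have hε (n : ℕ) : (0 : ℝ) < 1 / ((n : ℝ) + 1) := Nat.one_div_pos_of_nat
  have hcut (n : ℕ) (z : V3 × V3) :
      0 ≤ sq3 (z.1 - z.2) / (sq3 (z.1 - z.2) + 1 / ((n : ℝ) + 1)) ∧
      sq3 (z.1 - z.2) / (sq3 (z.1 - z.2) + 1 / ((n : ℝ) + 1)) ≤ 1 := by
    have hD := sq3_add_pos (hε n) (z.1 - z.2)
    refine ⟨div_nonneg (sq3_nonneg _) hD.le, ?_⟩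
    rw [div_le_one hD]
    linarith [hε n]
  have hmeas (n : ℕ) : Continuous fun z : V3 × V3 =>
      sq3 (z.1 - z.2) / (sq3 (z.1 - z.2) + 1 / ((n : ℝ) + 1)) := by
    have := continuous_sq3
    exact Continuous.div (by fun_prop) (by fun_prop) fun z => (sq3_add_pos (hε n) _).ne'
  have hlim : Tendsto (fun n : ℕ => ∫ z in S, G z / (nrm3 (z.1 - z.2)) ^ ((3 : ℝ) / 2) *
      (sq3 (z.1 - z.2) / (sq3 (z.1 - z.2) + 1 / ((n : ℝ) + 1)))) atTop
      (𝓝 (∫ z in S, G z / (nrm3 (z.1 - z.2)) ^ ((3 : ℝ) / 2))) := by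
    refine tendsto_integral_of_dominated_convergence _
      (fun n => hint.aestronglyMeasurable.mul (hmeas n).aestronglyMeasurable) hint.norm
      (fun n => Eventually.of_forall fun z => ?_) (Eventually.of_forall fun z => ?_)
    · rw [norm_mul, Real.norm_of_nonneg (hcut n z).1]
      exact mul_le_of_le_one_right (norm_nonneg _) (hcut n z).2
    · rcases (sq3_nonneg (z.1 - z.2)).eq_or_lt with h | h
      · have : nrm3 (z.1 - z.2) = 0 := by rw [nrm3, ← h, Real.sqrt_zero]
        rw [this, Real.zero_rpow (by norm_num)]
        simp
      · have h1 : Tendsto (fun n : ℕ => sq3 (z.1 - z.2) + 1 / ((n : ℝ) + 1)) atTop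
            (𝓝 (sq3 (z.1 - z.2) + 0)) :=
          tendsto_const_nhds.add tendsto_one_div_add_atTop_nhds_zero_nat
        rw [add_zero] at h1
        have h2 := (tendsto_const_nhds (x := sq3 (z.1 - z.2))).div h1 h.ne'
        rw [div_self h.ne'] at h2
        simpa using h2.const_mul (G z / (nrm3 (z.1 - z.2)) ^ ((3 : ℝ) / 2))
  refine le_of_tendsto' hlim fun n => ?_
  have hreg := integrable_div_sq3_add hG (hε n)
  calc ∫ z in S, G z / (nrm3 (z.1 - z.2)) ^ ((3 : ℝ) / 2) *
        (sq3 (z.1 - z.2) / (sq3 (z.1 - z.2) + 1 / ((n : ℝ) + 1)))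
      ≤ ∫ z in S, (G z + G z * (1 / (sq3 (z.1 - z.2) + 1 / ((n : ℝ) + 1)))) := by
        refine integral_mono (hint.mul_bdd (c := 1) (hmeas n).aestronglyMeasurable
          (Eventually.of_forall fun z => ?_)) (hG.add hreg).integrableOn fun z => ?_
        · rw [Real.norm_of_nonneg (hcut n z).1]
          exact (hcut n z).2
        · have := mul_le_mul_of_nonneg_left
            (rpow_neg_mul_sq_div_le (Real.sqrt_nonneg (sq3 (z.1 - z.2))) (hε n)) (h0 z)
          rw [← nrm3, nrm3_sq] at this
          calc _ = _ := by ring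
            _ ≤ _ := this
            _ = _ := by ring
    _ ≤ ∫ z, (G z + G z * (1 / (sq3 (z.1 - z.2) + 1 / ((n : ℝ) + 1)))) := by
        refine setIntegral_le_integral (hG.add hreg) (Eventually.of_forall fun z => ?_)
        have := sq3_add_pos (hε n) (z.1 - z.2)
        have := h0 z
        simp only [Pi.zero_apply]
        positivity
    _ ≤ 1 + fisher2 G := by
        rw [integral_add hG hreg, hone]
        gcongr
        exact integral_div_sq3_add_le_fisher2 h0 hG hdiff hI (hε n)
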